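/- Let S be a numerical semigroup minimally generated by n_1 < … < n_d, let k be a field and let s ∈ S. The following are equivalent: (1) AP(S,s) is homogeneous; (2) for every factorization c of s there exists a minimal generating set E of the toric ideal I_S consisting of binomials such that every non-homogeneous element of E has one of its two monomials divisible by x^c. -/

import Mathlib

open scoped BigOperators

/-- The value `Σ aᵢ nᵢ` of a tuple of coefficients `a` w.r.t. the generators `n`. -/
def sval {d : ℕ} (n : Fin d → ℕ) (a : Fin d → ℕ) : ℕ := ∑ i, a i * n i

/-- The total length `Σ aᵢ` of a factorization. -/
def tlen {d : ℕ} (a : Fin d → ℕ) : ℕ := ∑ i, a i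

/-- The submonoid of `ℕ` generated by `n`. -/
def gen {d : ℕ} (n : Fin d → ℕ) : Set ℕ := {s : ℕ | ∃ a : Fin d → ℕ, s = sval n a}

/-- The Apéry set of the semigroup generated by `n` with respect to `s`:
elements `x` of the semigroup such that `x - s` is not in the semigroup. -/
def Apery {d : ℕ} (n : Fin d → ℕ) (s : ℕ) : Set ℕ :=
  {x : ℕ | x ∈ gen n ∧ ¬ ∃ y ∈ gen n, x = s + y}

/-- A subset `T` is homogeneous if every nonzero element of `T` has all its
factorizations of the same length. -/
def HomogSet {d : ℕ} (n : Fin d → ℕ) (T : Set ℕ) : Prop :=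
  ∀ t ∈ T, t ≠ 0 → ∀ a b : Fin d → ℕ, sval n a = t → sval n b = t → tlen a = tlen b

/-- The order of `s`: the maximal length of a factorization of `s`. -/
noncomputable def ordS {d : ℕ} (n : Fin d → ℕ) (s : ℕ) : ℕ :=
  sSup {l : ℕ | ∃ a : Fin d → ℕ, sval n a = s ∧ tlen a = l}

/-- The torsion set of the semigroup generated by `n`, with respect to the
generator of index `i0` (the smallest generator). -/
noncomputable def Torsion {d : ℕ} (n : Fin d → ℕ) (i0 : Fin d) : Set ℕ :=
  {s : ℕ | s ∈ gen n ∧ ∃ c : ℕ, 0 < c ∧ ordS n s + c < ordS n (s + c * n i0)}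

/-- `n` is a minimal system of generators: any expression of a generator as a
nonnegative combination of the generators has total coefficient sum one. -/
def MinGen {d : ℕ} (n : Fin d → ℕ) : Prop :=
  ∀ r : Fin d, ∀ a : Fin d → ℕ, n r = sval n a → tlen a = 1

/-- `n` generates a numerical semigroup (cofinite in `ℕ`). -/
def IsNumerical {d : ℕ} (n : Fin d → ℕ) : Prop := {x : ℕ | x ∉ gen n}.Finite

/-- The monomial `x^a = Π xᵢ^{aᵢ}`. -/
noncomputable def monom (k : Type*) [CommRing k] {d : ℕ} (a : Fin d → ℕ) :
    MvPolynomial (Fin d) k :=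
  ∏ i, (MvPolynomial.X i : MvPolynomial (Fin d) k) ^ a i

/-- The toric ideal `I_S`: kernel of `k[x₁,…,x_d] → k[t]`, `xᵢ ↦ t^{nᵢ}`. -/
noncomputable def toricIdeal (k : Type*) [CommRing k] {d : ℕ} (n : Fin d → ℕ) :
    Ideal (MvPolynomial (Fin d) k) :=
  RingHom.ker (MvPolynomial.aeval (R := k)
    (fun i => (Polynomial.X : Polynomial k) ^ n i)).toRingHom

/-- `E` is a minimal generating set of the ideal `I`: it spans `I` and no
proper subset spans `I`. -/
def IsMinGenSet {R : Type*} [CommRing R] (I : Ideal R) (E : Set R) : Prop :=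
  Ideal.span E = I ∧ ∀ E' : Set R, E' ⊂ E → Ideal.span E' ≠ I

/-- Membership of an integer in the semigroup generated by `n`. -/
def memZ {d : ℕ} (n : Fin d → ℕ) (z : ℤ) : Prop := ∃ x ∈ gen n, (x : ℤ) = z

/-- A numerical semigroup with Frobenius number `F = max (ℤ ∖ S)` is symmetric
if for every integer `z`, `z ∈ S ↔ F - z ∉ S`. -/
def IsSymmetric {d : ℕ} (n : Fin d → ℕ) : Prop :=
  ∃ F : ℤ, ¬ memZ n F ∧ (∀ z : ℤ, F < z → memZ n z) ∧
    ∀ z : ℤ, memZ n z ↔ ¬ memZ n (F - z)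

/-- A numerical semigroup with Frobenius number `F = max (ℤ ∖ S)` is
pseudo-symmetric if `F` is even and for every integer `z`,
`z ∈ S ↔ (z ≠ F/2 ∧ F - z ∉ S)`. -/
def IsPseudoSymmetric {d : ℕ} (n : Fin d → ℕ) : Prop :=
  ∃ F : ℤ, ¬ memZ n F ∧ (∀ z : ℤ, F < z → memZ n z) ∧ F % 2 = 0 ∧
    ∀ z : ℤ, memZ n z ↔ (z ≠ F / 2 ∧ ¬ memZ n (F - z))

/-- The generators `q·m₁,…,q·m_d, p·n₁,…,p·n_e` of the gluing of two numerical
semigroups. -/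
def glueGen {d e : ℕ} (mg : Fin d → ℕ) (ng : Fin e → ℕ) (p q : ℕ) :
    Fin (d + e) → ℕ :=
  Fin.append (fun i => q * mg i) (fun i => p * ng i)

/-!
Call two factorizations `a`, `b` of the same element `t` equivalent if `t ∉ AP(S,s)` or
`|a| = |b|`. This is a congruence on `ℕ^d`, because `AP(S,s)` is closed under divisors in `S`, and
`AP(S,s)` is homogeneous iff it is the full congruence "same value", whose binomial ideal is `I_S`.
For any factorization `c` of `s`, it is generated by the pairs that are homogeneous or have a member
above `c`: a factorization of `t = s + y` is linked to every other one through `c + e`, with `e` a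
factorization of `y`. A congruence on `ℕ^d` can be recovered from its binomial ideal, so homogeneity
of `AP(S,s)` says precisely that the corresponding binomials generate `I_S`.
-/

variable {d : ℕ}

section Factorizations

variable {n a b c : Fin d → ℕ} {s : ℕ}

lemma sval_add (n a b : Fin d → ℕ) : sval n (a + b) = sval n a + sval n b := by
  simp only [sval, Pi.add_apply, add_mul, Finset.sum_add_distrib]

lemma sval_single (n : Fin d → ℕ) (i : Fin d) : sval n (Pi.single i 1) = n i := by
  simp [sval, Pi.single_apply]

lemma tlen_add (a b : Fin d → ℕ) : tlen (a + b) = tlen a + tlen b :=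
  Finset.sum_add_distrib

lemma sval_eq_zero_iff (hn : ∀ i, 0 < n i) : sval n a = 0 ↔ a = 0 := by
  simp [sval, funext_iff, (hn _).ne']

/-- `sval n` as a homomorphism, whose kernel congruence relates the factorizations of the same
element. -/
def svalHom (n : Fin d → ℕ) : (Fin d → ℕ) →+ ℕ where
  toFun := sval n
  map_zero' := by simp [sval]
  map_add' := sval_add n

lemma sval_mem_Apery_iff : sval n a ∈ Apery n s ↔ ∀ e, sval n a ≠ s + sval n e := by
  refine ⟨fun h e he => h.2 ⟨_, ⟨e, rfl⟩, he⟩, fun h => ⟨⟨a, rfl⟩, ?_⟩⟩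
  rintro ⟨_, ⟨e, rfl⟩, he⟩
  exact h e he

lemma sval_mem_Apery_of_sval_add_mem (h : sval n (a + b) ∈ Apery n s) :
    sval n a ∈ Apery n s := by
  rw [sval_mem_Apery_iff] at h ⊢
  intro e he
  exact h (e + b) (by rw [sval_add, sval_add, he, add_assoc])

lemma sval_notMem_Apery_of_le (h : c ≤ a) : sval n a ∉ Apery n (sval n c) := by
  obtain ⟨e, rfl⟩ := exists_add_of_le h
  exact fun ha => sval_mem_Apery_iff.1 ha e (sval_add n c e)

/-- The congruence on factorizations identifying those of the same element `t`, provided that they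
also have the same length when `t` lies in the Apéry set of `s`. -/
def aperyCon (n : Fin d → ℕ) (s : ℕ) : AddCon (Fin d → ℕ) where
  r a b := sval n a = sval n b ∧ (sval n a ∈ Apery n s → tlen a = tlen b)
  iseqv :=
    { refl := fun _ => ⟨rfl, fun _ => rfl⟩
      symm := fun ⟨hv, hl⟩ => ⟨hv.symm, fun h => (hl (hv ▸ h)).symm⟩
      trans := fun ⟨hv, hl⟩ ⟨hv', hl'⟩ =>
        ⟨hv.trans hv', fun h => (hl h).trans (hl' (hv ▸ h))⟩ }
  add' := by
    rintro a b a' b' ⟨hv, hl⟩ ⟨hv', hl'⟩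
    refine ⟨by rw [sval_add, sval_add, hv, hv'], fun h => ?_⟩
    rw [tlen_add, tlen_add, hl (sval_mem_Apery_of_sval_add_mem h),
      hl' (sval_mem_Apery_of_sval_add_mem (add_comm a a' ▸ h))]

lemma aperyCon_apply :
    aperyCon n s a b ↔ sval n a = sval n b ∧ (sval n a ∈ Apery n s → tlen a = tlen b) :=
  Iff.rfl

lemma homogSet_Apery_iff (hn : ∀ i, 0 < n i) :
    HomogSet n (Apery n s) ↔ aperyCon n s = AddCon.ker (svalHom n) := by
  constructor
  · intro hom
    ext a b
    refine ⟨And.left, fun (hab : sval n a = sval n b) => ⟨hab, fun ha => ?_⟩⟩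
    by_cases h0 : sval n a = 0
    · have ha0 : a = 0 := (sval_eq_zero_iff hn).1 h0
      have hb0 : b = 0 := (sval_eq_zero_iff hn).1 (hab.symm.trans h0)
      rw [ha0, hb0]
    · exact hom _ ha h0 a b rfl hab.symm
  · rintro hcon t ht - a b rfl hb
    have hab : aperyCon n s a b := by
      rw [hcon]
      exact hb.symm
    exact hab.2 ht

/-- The relation between exponents `a`, `b` saying that `x^a - x^b` is a binomial of the toric ideal
which is homogeneous or has one of its monomials divisible by `x^c`. -/
def HomogOrDvd (n c a b : Fin d → ℕ) : Prop :=
  sval n a = sval n b ∧ (tlen a ≠ tlen b → c ≤ a ∨ c ≤ b)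

lemma HomogOrDvd.symm (h : HomogOrDvd n c a b) : HomogOrDvd n c b a :=
  ⟨h.1.symm, fun hl => (h.2 hl.symm).symm⟩

theorem addConGen_homogOrDvd (n c : Fin d → ℕ) :
    addConGen (HomogOrDvd n c) = aperyCon n (sval n c) := by
  refine le_antisymm (AddCon.addConGen_le.2 ?_) fun a b hab => ?_
  · rintro a b ⟨hv, hl⟩
    refine ⟨hv, fun ha => ?_⟩
    by_contra hne
    rcases hl hne with h | h
    · exact sval_notMem_Apery_of_le h ha
    · exact sval_notMem_Apery_of_le h (hv ▸ ha)
  · obtain ⟨hv, hl⟩ := aperyCon_apply.1 hab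
    by_cases ha : sval n a ∈ Apery n (sval n c)
    · exact .of _ _ ⟨hv, fun hne => absurd (hl ha) hne⟩
    · obtain ⟨e, he⟩ : ∃ e, sval n a = sval n c + sval n e := by
        simpa [sval_mem_Apery_iff] using ha
      have linked {f : Fin d → ℕ} (hf : sval n f = sval n a) : HomogOrDvd n c f (c + e) :=
        ⟨by rw [hf, he, sval_add], fun _ => .inr le_self_add⟩
      exact .trans (.of _ _ (linked rfl)) (.of _ _ (linked hv.symm).symm)

end Factorizations

section Monomials

variable (k : Type*) [CommRing k]

lemma monom_eq_monomial (a : Fin d → ℕ) :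
    monom k a = MvPolynomial.monomial (Finsupp.equivFunOnFinite.symm a) 1 := by
  rw [MvPolynomial.monomial_eq]
  simp [monom, Finsupp.prod_fintype]

lemma monomial_eq_smul_monom (u : Fin d →₀ ℕ) (r : k) :
    MvPolynomial.monomial u r = r • monom k u := by
  simp [monom_eq_monomial, MvPolynomial.smul_monomial]

lemma monom_add (a b : Fin d → ℕ) : monom k (a + b) = monom k a * monom k b := by
  simp only [monom, Pi.add_apply, pow_add, Finset.prod_mul_distrib]

lemma monom_single (i : Fin d) : monom k (Pi.single i 1) = MvPolynomial.X i := by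
  simp [monom, Pi.single_apply, pow_ite]

lemma map_monom {l : Type*} [CommRing l] (f : k →+* l) (a : Fin d → ℕ) :
    MvPolynomial.map f (monom k a) = monom l a := by
  simp only [monom, map_prod, map_pow, MvPolynomial.map_X]

variable {k} [Nontrivial k]

lemma monom_dvd_monom_iff {a b : Fin d → ℕ} : monom k a ∣ monom k b ↔ a ≤ b := by
  simp [monom_eq_monomial, MvPolynomial.monomial_dvd_monomial, ← Finsupp.coe_le_coe]

lemma eq_or_swap_of_monom_sub_monom_eq {a b a' b' : Fin d → ℕ} (hab : a ≠ b)
    (h : monom k a - monom k b = monom k a' - monom k b') :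
    (a = a' ∧ b = b') ∨ (a = b' ∧ b = a') := by
  have hadd : monom k a + monom k b' = monom k a' + monom k b := by
    linear_combination h
  simp only [monom_eq_monomial, ← MvPolynomial.single_eq_monomial,
    AddMonoidAlgebra.single_add_single_inj one_ne_zero one_ne_zero,
    EmbeddingLike.apply_eq_iff_eq] at hadd
  tauto

end Monomials

section Binomials

variable (k : Type*) [CommRing k]

/-- The binomials `x^a - x^b` with `a`, `b` related by `r`. -/
def binomials (r : (Fin d → ℕ) → (Fin d → ℕ) → Prop) : Set (MvPolynomial (Fin d) k) :=
  {f | ∃ a b, r a b ∧ monom k a - monom k b = f}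

lemma binomials_mono {r r' : (Fin d → ℕ) → (Fin d → ℕ) → Prop} (h : ∀ a b, r a b → r' a b) :
    binomials k r ⊆ binomials k r' :=
  fun _ ⟨a, b, hab, hf⟩ => ⟨a, b, h a b hab, hf⟩

variable {k}

lemma monom_sub_monom_mem_of_addConGen {r : (Fin d → ℕ) → (Fin d → ℕ) → Prop}
    {J : Ideal (MvPolynomial (Fin d) k)} (hr : ∀ a b, r a b → monom k a - monom k b ∈ J)
    {a b : Fin d → ℕ} (hab : addConGen r a b) : monom k a - monom k b ∈ J := by
  induction hab with
  | of a b h => exact hr a b h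
  | refl a => simp
  | symm _ h => exact sub_mem_comm_iff.1 h
  | trans _ _ h h' => simpa using J.add_mem h h'
  | add _ _ h h' =>
    rw [monom_add, monom_add]
    exact J.mul_sub_mul_mem h h'

variable (k)

lemma span_binomials_addConGen (r : (Fin d → ℕ) → (Fin d → ℕ) → Prop) :
    Ideal.span (binomials k (addConGen r)) = Ideal.span (binomials k r) := by
  apply le_antisymm
  · rw [Ideal.span_le]
    rintro _ ⟨a, b, hab, rfl⟩
    have hr : ∀ a b, r a b → monom k a - monom k b ∈ Ideal.span (binomials k r) :=
      fun a b h => Ideal.subset_span ⟨a, b, h, rfl⟩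
    exact monom_sub_monom_mem_of_addConGen hr hab
  · exact Ideal.span_mono (binomials_mono k fun a b => AddConGen.Rel.of a b)

/-- The homomorphism from the polynomial ring to the monoid algebra of `M` sending `x^a` to the
basis element of `φ a`. -/
noncomputable def monoidAlgebraHom {M : Type*} [AddCommMonoid M] (φ : (Fin d → ℕ) →+ M) :
    MvPolynomial (Fin d) k →ₐ[k] AddMonoidAlgebra k M :=
  AddMonoidAlgebra.mapDomainAlgHom k k (φ.comp Finsupp.coeFnAddHom)

variable {M : Type*} [AddCommMonoid M] (φ : (Fin d → ℕ) →+ M)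

lemma monoidAlgebraHom_monom (a : Fin d → ℕ) :
    monoidAlgebraHom k φ (monom k a) = AddMonoidAlgebra.single (φ a) 1 := by
  rw [monom_eq_monomial]
  exact AddMonoidAlgebra.mapDomain_single

theorem ker_monoidAlgebraHom :
    RingHom.ker (monoidAlgebraHom k φ) = Ideal.span (binomials k (AddCon.ker φ)) := by
  apply le_antisymm
  · let ρ : M → Fin d → ℕ := Function.invFun φ
    have hρ (a : Fin d → ℕ) : φ (ρ (φ a)) = φ a := Function.apply_invFun_apply
    let lift : AddMonoidAlgebra k M →ₗ[k] MvPolynomial (Fin d) k :=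
      AddMonoidAlgebra.mapDomainLinearMap k k (Finsupp.equivFunOnFinite.symm ∘ ρ)
    have hlift (m : M) : lift (AddMonoidAlgebra.single m 1) = monom k (ρ m) := by
      simp [lift, monom_eq_monomial, ← MvPolynomial.single_eq_monomial]
    have sub_lift_mem (p : MvPolynomial (Fin d) k) :
        p - lift (monoidAlgebraHom k φ p) ∈ Ideal.span (binomials k (AddCon.ker φ)) := by
      induction p using MvPolynomial.induction_on' with
      | monomial u r =>
        rw [monomial_eq_smul_monom, map_smul, map_smul, monoidAlgebraHom_monom, hlift, ← smul_sub]
        exact Submodule.smul_of_tower_mem _ r (Ideal.subset_span ⟨u, _, (hρ u).symm, rfl⟩)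
      | add p q hp hq =>
        rw [map_add, map_add, add_sub_add_comm]
        exact Ideal.add_mem _ hp hq
    intro p hp
    have := sub_lift_mem p
    rwa [RingHom.mem_ker.1 hp, map_zero, sub_zero] at this
  · rw [Ideal.span_le]
    rintro _ ⟨a, b, hab, rfl⟩
    rw [SetLike.mem_coe, RingHom.mem_ker, map_sub, monoidAlgebraHom_monom, monoidAlgebraHom_monom,
      AddCon.ker_apply.1 hab, sub_self]

lemma monom_sub_monom_mem_span_binomials_iff [Nontrivial k] {C : AddCon (Fin d → ℕ)}
    {a b : Fin d → ℕ} : monom k a - monom k b ∈ Ideal.span (binomials k C) ↔ C a b := by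
  rw [← AddCon.mk'_ker C, ← ker_monoidAlgebraHom, RingHom.mem_ker, map_sub, sub_eq_zero,
    monoidAlgebraHom_monom, monoidAlgebraHom_monom, AddMonoidAlgebra.single_left_inj one_ne_zero,
    AddCon.ker_apply]

theorem span_binomials_inj [Nontrivial k] {C D : AddCon (Fin d → ℕ)} :
    Ideal.span (binomials k C) = Ideal.span (binomials k D) ↔ C = D := by
  refine ⟨fun h => ?_, fun h => h ▸ rfl⟩
  ext a b
  rw [← monom_sub_monom_mem_span_binomials_iff k, h, monom_sub_monom_mem_span_binomials_iff]

theorem toricIdeal_eq_span_binomials (n : Fin d → ℕ) :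
    toricIdeal k n = Ideal.span (binomials k (AddCon.ker (svalHom n))) := by
  have hom_eq : (Polynomial.toFinsuppIsoAlg k).toAlgHom.comp
      (MvPolynomial.aeval fun i => Polynomial.X ^ n i) = monoidAlgebraHom k (svalHom n) := by
    ext i : 1
    have hval : svalHom n (Pi.single i 1) = n i := sval_single n i
    rw [← monom_single, monoidAlgebraHom_monom, hval]
    simp [monom_single]
  rw [← ker_monoidAlgebraHom, ← hom_eq]
  ext p
  simp [toricIdeal, RingHom.mem_ker]

lemma monom_sub_monom_mem_toricIdeal_iff [Nontrivial k] {n a b : Fin d → ℕ} :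
    monom k a - monom k b ∈ toricIdeal k n ↔ sval n a = sval n b := by
  rw [toricIdeal_eq_span_binomials, monom_sub_monom_mem_span_binomials_iff]
  exact AddCon.ker_apply

-- Binomials have integer coefficients, so Hilbert's basis theorem over `ℤ` suffices for any `k`.
lemma span_binomials_fg (r : (Fin d → ℕ) → (Fin d → ℕ) → Prop) :
    (Ideal.span (binomials k r)).FG := by
  have himage : binomials k r = MvPolynomial.map (Int.castRingHom k) '' binomials ℤ r := by
    ext f
    simp [binomials, map_monom]
  rw [himage, ← Ideal.map_span]
  exact Ideal.FG.map (IsNoetherian.noetherian (Ideal.span (binomials ℤ r))) _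

end Binomials

lemma exists_isMinGenSet_subset {R : Type*} [CommRing R] {B : Set R} (hB : (Ideal.span B).FG) :
    ∃ E ⊆ B, IsMinGenSet (Ideal.span B) E := by
  obtain ⟨T, hTB, hT⟩ := (Submodule.fg_span_iff_fg_span_finset_subset B).1 hB
  obtain ⟨E, hET, hE, hmin⟩ := exists_minimal_le_of_wellFoundedLT
    (fun F : Finset R => Ideal.span (F : Set R) = Ideal.span B) T hT.symm
  refine ⟨E, (Finset.coe_subset.2 hET).trans hTB, hE, fun E' hE' hspan => hE'.2 ?_⟩
  lift E' to Finset R using E.finite_toSet.subset hE'.1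
  exact Finset.coe_subset.2 (hmin hspan (Finset.coe_subset.1 hE'.1))

section Main

variable (k : Type*) [CommRing k] [Nontrivial k] {n c : Fin d → ℕ}

lemma exists_isMinGenSet_homogOrDvd_iff :
    (∃ E : Set (MvPolynomial (Fin d) k),
        IsMinGenSet (toricIdeal k n) E ∧
        (∀ f ∈ E, ∃ a b : Fin d → ℕ, f = monom k a - monom k b) ∧
        (∀ a b : Fin d → ℕ, monom k a - monom k b ∈ E → tlen a ≠ tlen b →
          (monom k c ∣ monom k a ∨ monom k c ∣ monom k b))) ↔
      Ideal.span (binomials k (HomogOrDvd n c)) = toricIdeal k n := by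
  simp only [monom_dvd_monom_iff]
  constructor
  · rintro ⟨E, hE, hbinom, hdvd⟩
    have hEB : E ⊆ binomials k (HomogOrDvd n c) := by
      intro f hf
      obtain ⟨a, b, rfl⟩ := hbinom f hf
      have hmem : monom k a - monom k b ∈ toricIdeal k n := hE.1 ▸ Ideal.subset_span hf
      have hval : sval n a = sval n b := (monom_sub_monom_mem_toricIdeal_iff k).1 hmem
      exact ⟨a, b, ⟨hval, hdvd a b hf⟩, rfl⟩
    refine le_antisymm ?_ (hE.1 ▸ Ideal.span_mono hEB)
    rw [toricIdeal_eq_span_binomials]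
    exact Ideal.span_mono (binomials_mono k fun _ _ => And.left)
  · intro hspan
    obtain ⟨E, hEB, hE⟩ := exists_isMinGenSet_subset (span_binomials_fg k (HomogOrDvd n c))
    refine ⟨E, hspan ▸ hE, fun f hf => ?_, fun a b hab hl => ?_⟩
    · obtain ⟨a, b, -, rfl⟩ := hEB hf
      exact ⟨a, b, rfl⟩
    · obtain ⟨a', b', h, heq⟩ := hEB hab
      have hne : a ≠ b := fun hab => hl (congrArg tlen hab)
      rcases eq_or_swap_of_monom_sub_monom_eq hne heq.symm with ⟨rfl, rfl⟩ | ⟨rfl, rfl⟩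
      · exact h.2 hl
      · exact h.symm.2 hl

lemma span_binomials_homogOrDvd_eq_toricIdeal_iff :
    Ideal.span (binomials k (HomogOrDvd n c)) = toricIdeal k n ↔
      aperyCon n (sval n c) = AddCon.ker (svalHom n) := by
  rw [← span_binomials_addConGen, addConGen_homogOrDvd, toricIdeal_eq_span_binomials,
    span_binomials_inj]

end Main

theorem statement2_general (k : Type*) [CommRing k] [Nontrivial k]
    (n : Fin d → ℕ) (hn : ∀ i, 0 < n i) (s : ℕ) (hs : s ∈ gen n) :
    HomogSet n (Apery n s) ↔
      ∀ c : Fin d → ℕ, sval n c = s →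
        ∃ E : Set (MvPolynomial (Fin d) k),
          IsMinGenSet (toricIdeal k n) E ∧
          (∀ f ∈ E, ∃ a b : Fin d → ℕ, f = monom k a - monom k b) ∧
          (∀ a b : Fin d → ℕ, monom k a - monom k b ∈ E → tlen a ≠ tlen b →
            (monom k c ∣ monom k a ∨ monom k c ∣ monom k b)) := by
  simp only [exists_isMinGenSet_homogOrDvd_iff, span_binomials_homogOrDvd_eq_toricIdeal_iff,
    homogSet_Apery_iff hn]
  obtain ⟨c, rfl⟩ := hs
  exact ⟨fun h c' hc' => hc' ▸ h, fun h => h c rfl⟩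

/-- `AP(S,s)` is homogeneous iff for every factorization `c` of
`s` there is a minimal binomial generating set of `I_S` each of whose
non-homogeneous elements has a monomial divisible by `x^c`. -/
theorem statement2 {d : ℕ} (hd : 0 < d) (k : Type*) [Field k]
    (n : Fin d → ℕ) (hmono : StrictMono n) (hpos : 0 < n ⟨0, hd⟩)
    (hnum : IsNumerical n) (hmin : MinGen n) (s : ℕ) (hs : s ∈ gen n) :
    HomogSet n (Apery n s) ↔
      ∀ c : Fin d → ℕ, sval n c = s →
        ∃ E : Set (MvPolynomial (Fin d) k),
          IsMinGenSet (toricIdeal k n) E ∧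
          (∀ f ∈ E, ∃ a b : Fin d → ℕ, f = monom k a - monom k b) ∧
          (∀ a b : Fin d → ℕ, monom k a - monom k b ∈ E → tlen a ≠ tlen b →
            (monom k c ∣ monom k a ∨ monom k c ∣ monom k b)) :=
  statement2_general k n (fun _ => hpos.trans_le (hmono.monotone (Nat.zero_le _))) s hs
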